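/- For all positive integers ℓ and m, the number of spanning trees of the rectangular grid graph satisfies τ(ℓ,m) = ∏_{j=1}^{ℓ-1} ∏_{k=1}^{m-1} (λ_j(ℓ) + λ_k(m)), where the product is interpreted as the empty product (equal to 1) when ℓ = 1 or m = 1. -/

import Mathlib

open Real Finset

/-- The rectangular grid graph `R_{ℓ,m}`: the box (Cartesian) product of the path
graphs on `ℓ` and `m` vertices. -/
def gridGraph (l m : ℕ) : SimpleGraph (Fin l × Fin m) :=
  (SimpleGraph.pathGraph l).boxProd (SimpleGraph.pathGraph m)

/-- `gridTau l m` is the number of spanning trees of the `l × m` rectangular grid graph,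
i.e. the number of spanning subgraphs of `gridGraph l m` that are trees. -/
noncomputable def gridTau (l m : ℕ) : ℕ :=
  Set.ncard {H : (gridGraph l m).Subgraph | H.IsSpanning ∧ H.coe.IsTree}

/-- `pathEig r j = λ_j(r) = 2 - 2 cos (π j / r)`. -/
noncomputable def pathEig (r j : ℕ) : ℝ := 2 - 2 * Real.cos (π * j / r)

/-!
A spanning tree rooted at `r` is the same as a parent map, sending every vertex `v ≠ r` to a
neighbour, whose iterates lead every vertex to `r`. Each row of the Laplacian is a sum over
neighbours, so by multilinearity the determinant of the Laplacian with row `r` replaced by a unit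
vector is a sum over all choices of parents. A choice contributes `1` if it leads every vertex to
`r` (a triangular matrix) and `0` otherwise (a kernel vector): this is the matrix-tree theorem.

Consequently, the number of vertices times the number of spanning trees is the product of the
eigenvalues of the Laplacian, the eigenvalue `0` of the constant vector being left out. For a box
product the eigenvalues are the sums `μ a + ν b`. Those with `a` or `b` the index of the constant
vector recombine into the counts for the two factors, and a path, being a tree, has just one
spanning tree. What remains is the product of the sums of nonzero eigenvalues of the two paths,
whose Laplacians are diagonalised by the discrete cosine transform.
-/

section ParentMaps

open SimpleGraph

variable {V : Type*} {r : V} {f g : V → V} {G : SimpleGraph V}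

/-- `f` is the parent map of a tree on `V` rooted at `r`: iterating `f` leads every vertex to `r`.
By convention the root is its own parent. -/
structure IsParentMap (r : V) (f : V → V) : Prop where
  map_root : f r = r
  exists_iterate_eq_root : ∀ v, ∃ k, f^[k] v = r

/-- The graph that joins every vertex to its image under `f`, loops being dropped. -/
def parentGraph (f : V → V) : SimpleGraph V := fromRel fun v u => f v = u

/-- The spanning trees of `G`, encoded as graphs on the whole vertex set. -/
def spanningTrees (G : SimpleGraph V) : Set (SimpleGraph V) := {T | T ≤ G ∧ T.IsTree}

lemma ncard_isSpanning_isTree_eq_ncard_spanningTrees (G : SimpleGraph V) :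
    {H : G.Subgraph | H.IsSpanning ∧ H.coe.IsTree}.ncard = (spanningTrees G).ncard := by
  refine Set.ncard_congr (fun H _ => H.spanningCoe) ?_ ?_ ?_
  · rintro H ⟨hs, ht⟩
    exact ⟨H.spanningCoe_le, (H.spanningCoeEquivCoeOfSpanning hs).isTree_iff.2 ht⟩
  · rintro H H' ⟨hs, _⟩ ⟨hs', _⟩ h
    exact Subgraph.ext
      ((Subgraph.isSpanning_iff.1 hs).trans
        (Subgraph.isSpanning_iff.1 hs').symm)
      (Subgraph.spanningCoe_inj.1 h)
  · rintro T ⟨hle, ht⟩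
    have hs := toSubgraph.isSpanning T hle
    exact ⟨toSubgraph T hle,
      ⟨hs, (Subgraph.spanningCoeEquivCoeOfSpanning _ hs).isTree_iff.1 ht⟩, rfl⟩

lemma spanningTrees_eq_singleton (hG : G.IsTree) : spanningTrees G = {G} := by
  ext T
  refine ⟨fun ⟨hle, hT⟩ => ?_, ?_⟩
  · exact hle.antisymm ((isTree_iff_minimal_connected.1 hG).2 hT.connected hle)
  · rintro rfl
    exact ⟨le_rfl, hG⟩

lemma parentGraph_adj {u v : V} : (parentGraph f).Adj v u ↔ v ≠ u ∧ (f v = u ∨ f u = v) :=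
  fromRel_adj _ _ _

lemma parentGraph_le_iff :
    parentGraph f ≤ G ↔ ∀ v, f v ≠ v → G.Adj v (f v) := by
  refine ⟨fun h v hv => h (parentGraph_adj.2 ⟨hv.symm, .inl rfl⟩), fun h u v huv => ?_⟩
  obtain ⟨hne, rfl | rfl⟩ := parentGraph_adj.1 huv
  · exact h u hne.symm
  · exact (h v hne).symm

lemma reachable_parentGraph_iterate (f : V → V) (v : V) (k : ℕ) :
    (parentGraph f).Reachable v (f^[k] v) := by
  induction k with
  | zero => rfl
  | succ k ih =>
    rw [Function.iterate_succ_apply']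
    by_cases h : f^[k] v = f (f^[k] v)
    · rwa [← h]
    · exact ih.trans (parentGraph_adj.2 ⟨h, .inl rfl⟩).reachable

lemma isParentMap_of_lt {d : V → ℕ} (hr : f r = r) (hd : ∀ v ≠ r, d (f v) < d v) :
    IsParentMap r f where
  map_root := hr
  exists_iterate_eq_root v := by
    induction hn : d v using Nat.strong_induction_on generalizing v with
    | _ n ih =>
      by_cases hv : v = r
      · exact ⟨0, hv⟩
      · obtain ⟨k, hk⟩ := ih _ (hn ▸ hd v hv) (f v) rfl
        exact ⟨k + 1, hk⟩

namespace IsParentMap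

lemma exists_lt (hf : IsParentMap r f) : ∃ d : V → ℕ, ∀ v ≠ r, d (f v) < d v := by
  classical
  refine ⟨fun v => Nat.find (hf.exists_iterate_eq_root v), fun v hv => ?_⟩
  change Nat.find (hf.exists_iterate_eq_root (f v)) < Nat.find (hf.exists_iterate_eq_root v)
  have hspec := Nat.find_spec (hf.exists_iterate_eq_root v)
  cases hk : Nat.find (hf.exists_iterate_eq_root v) with
  | zero => exact absurd (by rwa [hk] at hspec) hv
  | succ k =>
    rw [hk] at hspec
    exact Nat.lt_succ_of_le (Nat.find_min' _ hspec)

lemma apply_ne_self (hf : IsParentMap r f) {v : V} (hv : v ≠ r) : f v ≠ v := by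
  obtain ⟨d, hd⟩ := hf.exists_lt
  exact fun h => (hd v hv).ne (congrArg d h)

lemma parentGraph_le_iff (hf : IsParentMap r f) :
    parentGraph f ≤ G ↔ ∀ v ≠ r, G.Adj v (f v) := by
  rw [_root_.parentGraph_le_iff]
  refine forall_congr' fun v => imp_congr_left ⟨?_, hf.apply_ne_self⟩
  rintro h rfl
  exact h hf.map_root

lemma connected_parentGraph (hf : IsParentMap r f) : (parentGraph f).Connected := by
  have reachable_root (v : V) : (parentGraph f).Reachable v r := by
    obtain ⟨k, hk⟩ := hf.exists_iterate_eq_root v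
    exact hk ▸ reachable_parentGraph_iterate f v k
  have : Nonempty V := ⟨r⟩
  exact ⟨fun u v => (reachable_root u).trans (reachable_root v).symm⟩

-- Induction on the depth of `v`: if `g v ≠ f v`, then the edge from `v` to `f v` is
-- `g (f v) = v`, so that `f (f v) = v` by induction, although `f` decreases the depth.
lemma eq_of_parentGraph_le (hf : IsParentMap r f) (hg : g r = r)
    (h : parentGraph f ≤ parentGraph g) : f = g := by
  obtain ⟨d, hd⟩ := hf.exists_lt
  funext v
  induction hn : d v using Nat.strong_induction_on generalizing v with
  | _ n ih =>
    by_cases hv : v = r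
    · rw [hv, hf.map_root, hg]
    have hadj : (parentGraph g).Adj v (f v) := h (parentGraph_adj.2
      ⟨(hf.apply_ne_self hv).symm, .inl rfl⟩)
    obtain ⟨-, hgv | hgv⟩ := parentGraph_adj.1 hadj
    · exact hgv.symm
    have hcycle : f (f v) = v := (ih _ (hn ▸ hd v hv) (f v) rfl).trans hgv
    have hfv : f v ≠ r := fun hfv => hv (by rw [← hcycle, hfv, hf.map_root])
    have := hd (f v) hfv
    have := hd v hv
    rw [hcycle] at *
    omega

end IsParentMap

lemma exists_adj_dist_lt (hG : G.Connected) {v : V} (hv : v ≠ r) :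
    ∃ u, G.Adj v u ∧ G.dist u r < G.dist v r := by
  obtain ⟨p, hp⟩ := hG.exists_walk_length_eq_dist v r
  cases p with
  | nil => exact absurd rfl hv
  | cons hadj q =>
    refine ⟨_, hadj, ?_⟩
    rw [← hp, Walk.length_cons, Nat.lt_succ_iff]
    exact dist_le q

lemma exists_isParentMap_parentGraph_le (hG : G.Connected) (r : V) :
    ∃ f, IsParentMap r f ∧ parentGraph f ≤ G := by
  classical
  choose! p hadj hlt using fun v => exists_adj_dist_lt (r := r) (v := v) hG
  have hf : IsParentMap r (Function.update p r r) :=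
    isParentMap_of_lt (d := (G.dist · r)) (by simp) fun v hv => by simpa [hv] using hlt v hv
  exact ⟨_, hf, hf.parentGraph_le_iff.2 fun v hv => by simpa [hv] using hadj v hv⟩

lemma isTree_parentGraph (hf : IsParentMap r f) : (parentGraph f).IsTree := by
  refine isTree_of_minimal_connected ⟨hf.connected_parentGraph, fun H hH hle => ?_⟩
  obtain ⟨g, hg, hgH⟩ := exists_isParentMap_parentGraph_le hH r
  exact hg.eq_of_parentGraph_le hf.map_root (hgH.trans hle) ▸ hgH

lemma bijOn_parentGraph (G : SimpleGraph V) (r : V) :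
    Set.BijOn parentGraph {f | IsParentMap r f ∧ ∀ v ≠ r, G.Adj v (f v)} (spanningTrees G) := by
  refine ⟨fun f hf => ⟨hf.1.parentGraph_le_iff.2 hf.2, isTree_parentGraph hf.1⟩,
    fun f hf g hg h => hf.1.eq_of_parentGraph_le hg.1.map_root h.le, fun T hT => ?_⟩
  obtain ⟨f, hf, hle⟩ := exists_isParentMap_parentGraph_le hT.2.connected r
  exact ⟨f, ⟨hf, hf.parentGraph_le_iff.1 (hle.trans hT.1)⟩, hle.antisymm
    ((isTree_iff_minimal_connected.1 hT.2).2 hf.connected_parentGraph hle)⟩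

lemma isTree_hasse (α : Type*) [LinearOrder α] [OrderBot α] [PredOrder α] [IsPredArchimedean α] :
    (hasse α).IsTree := by
  have hpred : IsParentMap (⊥ : α) Order.pred :=
    ⟨Order.pred_bot, fun a => exists_pred_iterate_of_le bot_le⟩
  have covBy_iff (a b : α) : a ⋖ b ↔ b ≠ a ∧ Order.pred b = a := by
    refine ⟨fun h => ⟨h.ne', h.pred_eq⟩, ?_⟩
    rintro ⟨h, rfl⟩
    exact Order.pred_covBy_of_not_isMin (mt Order.pred_eq_iff_isMin.2 h.symm)
  have hasse_eq : hasse α = parentGraph Order.pred := by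
    ext a b
    rw [parentGraph_adj, hasse_adj, covBy_iff, covBy_iff]
    tauto
  exact hasse_eq ▸ isTree_parentGraph hpred

end ParentMaps

section MatrixTree

open Matrix SimpleGraph

variable {R : Type*} [CommRing R] {V : Type*} [Fintype V] [DecidableEq V] {r : V} {f : V → V}

/-- The Laplacian of the directed graph with arcs `v → f v`, its row `r` being replaced by the
`r`-th unit vector. -/
def parentLaplacian (R : Type*) [CommRing R] (r : V) (f : V → V) : Matrix V V R :=
  of fun v => if v = r then Pi.single r 1 else Pi.single v 1 - Pi.single (f v) 1

lemma parentLaplacian_mulVec (x : V → R) (v : V) :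
    (parentLaplacian R r f *ᵥ x) v = if v = r then x r else x v - x (f v) := by
  change (if v = r then _ else _) ⬝ᵥ x = _
  split_ifs <;> simp [sub_dotProduct]

-- Ordered by depth, the matrix is triangular with unit diagonal blocks.
lemma det_parentLaplacian_of_isParentMap (hf : IsParentMap r f) :
    (parentLaplacian R r f).det = 1 := by
  obtain ⟨d, hd⟩ := hf.exists_lt
  have apply_of_le {v u : V} (h : d v ≤ d u) :
      parentLaplacian R r f v u = (1 : Matrix V V R) v u := by
    by_cases hv : v = r
    · simp [parentLaplacian, hv, one_eq_pi_single]
    · have hu : u ≠ f v := by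
        rintro rfl
        exact (hd v hv).not_ge h
      simp [parentLaplacian, hv, hu, one_eq_pi_single]
  have triangular : (parentLaplacian R r f).BlockTriangular (OrderDual.toDual ∘ d) := by
    intro v u h
    have hlt : d v < d u := h
    rw [apply_of_le hlt.le, one_apply_ne (ne_of_apply_ne d hlt.ne)]
  have block_eq_one (k : ℕᵒᵈ) :
      (parentLaplacian R r f).toSquareBlock (OrderDual.toDual ∘ d) k = 1 := by
    ext ⟨v, hv⟩ ⟨u, hu⟩
    have hvu : d v = d u := OrderDual.toDual.injective (hv.trans hu.symm)
    simp [toSquareBlock_def, apply_of_le hvu.le, one_apply]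
  rw [triangular.det]
  exact prod_eq_one fun k _ => by rw [block_eq_one, det_one]

lemma det_mul_eq_zero_of_mulVec_eq_zero {A : Matrix V V R} {x : V → R} (hx : A *ᵥ x = 0) (v : V) :
    A.det * x v = 0 := by
  have h : A.det • x = 0 := by
    rw [← one_mulVec x, ← smul_mulVec, ← adjugate_mul, ← mulVec_mulVec, hx, mulVec_zero]
  exact congrFun h v

-- The indicator function of the vertices from which `f` does not lead to `r` is in the kernel.
lemma det_parentLaplacian_of_not_isParentMap (hr : f r = r) (hf : ¬ IsParentMap r f) :
    (parentLaplacian R r f).det = 0 := by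
  classical
  obtain ⟨v, hv⟩ : ∃ v, ¬ ∃ k, f^[k] v = r := by
    by_contra! h
    exact hf ⟨hr, h⟩
  have mulVec_eq_zero :
      parentLaplacian R r f *ᵥ (fun u => if ∃ k, f^[k] u = r then 0 else 1) = 0 := by
    ext u
    rw [parentLaplacian_mulVec]
    by_cases hu : u = r
    · rw [if_pos hu, if_pos ⟨0, rfl⟩, Pi.zero_apply]
    · have leads_iff : (∃ k, f^[k] u = r) ↔ ∃ k, f^[k] (f u) = r := by
        constructor
        · rintro ⟨_ | k, hk⟩
          · exact absurd hk hu
          · exact ⟨k, hk⟩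
        · rintro ⟨k, hk⟩
          exact ⟨k + 1, hk⟩
      simp [hu, leads_iff]
  simpa only [if_neg hv, mul_one] using det_mul_eq_zero_of_mulVec_eq_zero mulVec_eq_zero v

variable (G : SimpleGraph V) [DecidableRel G.Adj]

lemma lapMatrix_apply_eq_sum_neighborFinset (v : V) :
    G.lapMatrix R v = ∑ u ∈ G.neighborFinset v, (Pi.single v 1 - Pi.single u 1) := by
  ext w
  simp [lapMatrix, degMatrix, diagonal_apply, Pi.single_apply, Finset.sum_apply, eq_comm]

lemma lapMatrix_mulVec_eq_sum_sub (x : V → R) (v : V) :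
    (G.lapMatrix R *ᵥ x) v = ∑ u ∈ G.neighborFinset v, (x v - x u) := by
  rw [lapMatrix_mulVec_apply, sum_sub_distrib, sum_const, card_neighborFinset_eq_degree,
    nsmul_eq_mul]

lemma det_updateRow_lapMatrix_eq_sum (r : V) :
    ((G.lapMatrix R).updateRow r (Pi.single r 1)).det =
      ∑ f ∈ Fintype.piFinset (Function.update (fun v => G.neighborFinset v) r {r}),
        (parentLaplacian R r f).det := by
  have row_eq (v : V) : (G.lapMatrix R).updateRow r (Pi.single r 1) v =
      ∑ u ∈ Function.update (fun v => G.neighborFinset v) r {r} v,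
        if v = r then Pi.single r 1 else Pi.single v 1 - Pi.single u 1 := by
    by_cases hv : v = r
    · subst hv
      simp
    · simp [hv, lapMatrix_apply_eq_sum_neighborFinset]
  exact (congrArg det (funext row_eq)).trans (detRowAlternating.map_sum_finset _ _)

/-- The matrix-tree theorem: the determinant on the left is the cofactor of the Laplacian at
`(r, r)`. -/
theorem det_updateRow_lapMatrix_eq_ncard_spanningTrees (r : V) :
    ((G.lapMatrix R).updateRow r (Pi.single r 1)).det = (spanningTrees G).ncard := by
  classical
  have mem_iff (f : V → V) :
      f ∈ Fintype.piFinset (Function.update (fun v => G.neighborFinset v) r {r}) ↔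
        f r = r ∧ ∀ v ≠ r, G.Adj v (f v) := by
    rw [Fintype.mem_piFinset,
      Function.forall_update_iff (fun v => G.neighborFinset v) fun v s => f v ∈ s]
    simp
  have det_eq_ite {f : V → V} (hr : f r = r) :
      (parentLaplacian R r f).det = if IsParentMap r f then 1 else 0 := by
    split_ifs with hf
    · exact det_parentLaplacian_of_isParentMap hf
    · exact det_parentLaplacian_of_not_isParentMap hr hf
  have coe_filter_eq :
      {f ∈ Fintype.piFinset (Function.update (fun v => G.neighborFinset v) r {r}) |
        IsParentMap r f} = {f | IsParentMap r f ∧ ∀ v ≠ r, G.Adj v (f v)} := by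
    ext f
    simp only [coe_filter, Set.mem_ofPred_eq, mem_iff]
    exact ⟨fun h => ⟨h.2, h.1.2⟩, fun h => ⟨⟨h.1.map_root, h.2⟩, h.1⟩⟩
  rw [det_updateRow_lapMatrix_eq_sum,
    sum_congr rfl fun f hf => det_eq_ite ((mem_iff f).1 hf).1, sum_boole,
    ← (bijOn_parentGraph G r).image_eq, (bijOn_parentGraph G r).injOn.ncard_image,
    ← coe_filter_eq, Set.ncard_coe_finset]

lemma det_one_add_vecMulVec (x y : V → R) : (1 + vecMulVec x y).det = 1 + y ⬝ᵥ x := by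
  rw [vecMulVec_eq Unit, det_one_add_replicateCol_mul_replicateRow]

-- As `p` and `q` annihilate `L`, the factors `1 + (x - z) pᵀ` on the left and `1 + q (y - w)ᵀ` on
-- the right change only the rank-one part of `L + z wᵀ`.
lemma det_add_vecMulVec_eq {L : Matrix V V R} {p q : V → R} (hp : p ᵥ* L = 0) (hq : L *ᵥ q = 0)
    (x y : V → R) {z w : V → R} (hz : p ⬝ᵥ z = 1) (hw : w ⬝ᵥ q = 1) :
    (L + vecMulVec x y).det = (p ⬝ᵥ x) * (y ⬝ᵥ q) * (L + vecMulVec z w).det := by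
  have mul_left : (1 + vecMulVec (x - z) p) * (L + vecMulVec z w) = L + vecMulVec x w := by
    rw [add_mul, one_mul, mul_add, vecMulVec_mul, hp, vecMulVec_mul_vecMulVec, hz, one_smul,
      vecMulVec_zero, zero_add, sub_vecMulVec, add_assoc, add_sub_cancel]
  have mul_right : (L + vecMulVec x w) * (1 + vecMulVec q (y - w)) = L + vecMulVec x y := by
    rw [mul_add, mul_one, add_mul, mul_vecMulVec, hq, vecMulVec_mul_vecMulVec, hw, one_smul,
      zero_vecMulVec, zero_add, vecMulVec_sub, add_assoc, add_sub_cancel]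
  rw [← mul_right, ← mul_left, det_mul, det_mul, det_one_add_vecMulVec, det_one_add_vecMulVec,
    dotProduct_sub, sub_dotProduct, hz, hw, add_sub_cancel, add_sub_cancel]
  ring

lemma det_lapMatrix_add_vecMulVec [Nonempty V] (x y : V → R) :
    (G.lapMatrix R + vecMulVec x y).det = (∑ v, x v) * (∑ v, y v) * (spanningTrees G).ncard := by
  obtain ⟨r⟩ := ‹Nonempty V›
  have hrow : G.lapMatrix R *ᵥ 1 = 0 := G.lapMatrix_mulVec_const_eq_zero
  have hcol : 1 ᵥ* G.lapMatrix R = 0 := by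
    rw [← mulVec_transpose, G.isSymm_lapMatrix R, hrow]
  have updateRow_eq : (G.lapMatrix R).updateRow r (Pi.single r 1) =
      G.lapMatrix R + vecMulVec (Pi.single r 1) (Pi.single r 1 - G.lapMatrix R r) := by
    ext v w
    by_cases hv : v = r <;> simp [hv, vecMulVec_apply]
  have hw : (Pi.single r 1 - G.lapMatrix R r) ⬝ᵥ 1 = 1 := by
    have : G.lapMatrix R r ⬝ᵥ 1 = 0 := congrFun hrow r
    rw [sub_dotProduct, this]
    simp
  rw [det_add_vecMulVec_eq hcol hrow x y (z := Pi.single r 1) (by simp) hw, ← updateRow_eq,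
    det_updateRow_lapMatrix_eq_ncard_spanningTrees, one_dotProduct, dotProduct_one]

end MatrixTree

section Spectral

open Matrix SimpleGraph
open scoped Kronecker

lemma vecMulVec_col_single {R m n : Type*} [NonAssocSemiring R] [Fintype n] [DecidableEq n]
    (U : Matrix m n R) (i : n) :
    vecMulVec (U.col i) (Pi.single i 1) = U * diagonal (Pi.single i (1 : R)) := by
  ext v w
  rw [vecMulVec_apply, mul_diagonal]
  by_cases hw : w = i
  · rw [hw, col_apply]
  · simp [hw]

/-- The columns of `U` form a basis of eigenvectors of `A`, with eigenvalues `μ`. -/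
structure IsEigenbasis {ι R : Type*} [Fintype ι] [DecidableEq ι] [CommRing R]
    (A U : Matrix ι ι R) (μ : ι → R) : Prop where
  isUnit : IsUnit U
  mul_eq : A * U = U * diagonal μ

namespace IsEigenbasis

variable {R : Type*} [CommRing R] {V W : Type*} [Fintype V] [DecidableEq V]
  [Fintype W] [DecidableEq W]

lemma kronecker {A U : Matrix V V R} {B T : Matrix W W R} {μ : V → R} {ν : W → R}
    (hA : IsEigenbasis A U μ) (hB : IsEigenbasis B T ν) :
    IsEigenbasis (A ⊗ₖ 1 + 1 ⊗ₖ B) (U ⊗ₖ T) fun x => μ x.1 + ν x.2 where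
  isUnit := by
    rw [isUnit_iff_isUnit_det, det_kronecker]
    exact (((isUnit_iff_isUnit_det U).1 hA.isUnit).pow _).mul
      (((isUnit_iff_isUnit_det T).1 hB.isUnit).pow _)
  mul_eq := by
    have diagonal_eq : diagonal (fun x : V × W => μ x.1 + ν x.2) =
        diagonal μ ⊗ₖ 1 + 1 ⊗ₖ diagonal ν := by
      rw [← diagonal_one, ← diagonal_one, diagonal_kronecker_diagonal, diagonal_kronecker_diagonal,
        diagonal_add]
      simp
    rw [diagonal_eq, add_mul, mul_add]
    simp only [← mul_kronecker_mul, hA.mul_eq, hB.mul_eq, one_mul, mul_one]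

variable {G : SimpleGraph V} [DecidableRel G.Adj] {U : Matrix V V R} {μ : V → R} {i : V}

lemma eigenvalue_eq_zero_of_col_eq_one (h : IsEigenbasis (G.lapMatrix R) U μ) (hi : U.col i = 1) :
    μ i = 0 := by
  have hcol := congrFun (congrFun h.mul_eq i) i
  have hzero : (G.lapMatrix R * U) i i = 0 := by
    change (G.lapMatrix R *ᵥ U.col i) i = 0
    rw [hi]
    exact congrFun G.lapMatrix_mulVec_const_eq_zero i
  rw [hzero, mul_diagonal, ← col_apply U, hi] at hcol
  simpa using hcol.symm

-- Adding `1 wᵀ`, where `w` is the `i`-th row of `U⁻¹`, changes the eigenvalue `0` of the constant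
-- vector to `1` and keeps all other eigenvalues and eigenvectors.
theorem card_mul_ncard_spanningTrees (h : IsEigenbasis (G.lapMatrix R) U μ) (hi : U.col i = 1) :
    (Fintype.card V : R) * (spanningTrees G).ncard = ∏ j ∈ {i}ᶜ, μ j := by
  have hdet : IsUnit U.det := (isUnit_iff_isUnit_det U).1 h.isUnit
  have row_vecMul : U⁻¹.row i ᵥ* U = Pi.single i 1 := by
    change (U⁻¹ * U).row i = _
    ext j
    rw [nonsing_inv_mul U hdet, row_apply, one_eq_pi_single]
  have sum_row : ∑ v, U⁻¹.row i v = 1 := by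
    rw [← dotProduct_one, ← hi]
    change (U⁻¹ * U) i i = 1
    rw [nonsing_inv_mul U hdet, one_apply_eq]
  have mul_eq : (G.lapMatrix R + vecMulVec 1 (U⁻¹.row i)) * U =
      U * diagonal (μ + Pi.single i 1) := by
    rw [add_mul, vecMulVec_mul, row_vecMul, ← hi, vecMulVec_col_single, h.mul_eq, ← mul_add,
      diagonal_add]
    rfl
  have det_eq : (G.lapMatrix R + vecMulVec 1 (U⁻¹.row i)).det =
      (Fintype.card V : R) * (spanningTrees G).ncard := by
    have : Nonempty V := ⟨i⟩
    rw [det_lapMatrix_add_vecMulVec, sum_row]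
    simp
  rw [← det_eq, ← hdet.mul_left_inj, ← det_mul, mul_eq, det_mul, mul_comm, det_diagonal,
    Fintype.prod_eq_mul_prod_compl i]
  congr 1
  rw [Pi.add_apply, h.eigenvalue_eq_zero_of_col_eq_one hi, Pi.single_eq_same, zero_add, one_mul]
  refine prod_congr rfl fun j hj => ?_
  rw [Pi.add_apply, Pi.single_eq_of_ne (by simpa using hj), add_zero]

lemma of_injective {K : Type*} [Field K] {A U : Matrix V V K} {μ : V → K}
    (hμ : Function.Injective μ) (hU : ∀ j, U.col j ≠ 0) (hmul : A * U = U * diagonal μ) :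
    IsEigenbasis A U μ where
  isUnit := by
    refine linearIndependent_cols_iff_isUnit.1
      (Module.End.eigenvectors_linearIndependent' A.mulVecLin μ hμ U.col fun j => ?_)
    refine ⟨Module.End.mem_eigenspace_iff.2 (funext fun v => ?_), hU j⟩
    rw [Pi.smul_apply, smul_eq_mul, mul_comm, col_apply, ← mul_diagonal, ← hmul]
    rfl
  mul_eq := hmul

end IsEigenbasis

end Spectral

section BoxProd

open Matrix SimpleGraph
open scoped Kronecker

variable {V W : Type*} [Fintype V] [DecidableEq V] [Fintype W] [DecidableEq W]
  (G : SimpleGraph V) (H : SimpleGraph W) [DecidableRel G.Adj] [DecidableRel H.Adj]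

lemma lapMatrix_boxProd (R : Type*) [CommRing R] [DecidableRel (G.boxProd H).Adj] :
    (G.boxProd H).lapMatrix R = G.lapMatrix R ⊗ₖ 1 + 1 ⊗ₖ H.lapMatrix R := by
  ext ⟨a, b⟩ ⟨a', b'⟩
  simp only [lapMatrix, degMatrix, Matrix.add_apply, Matrix.sub_apply, kronecker_apply,
    diagonal_apply, one_apply, adjMatrix_apply, boxProd_adj, degree_boxProd, Prod.mk.injEq,
    Nat.cast_add]
  by_cases ha : a = a' <;> by_cases hb : b = b' <;> simp [ha, hb]

lemma prod_compl_singleton_add {R : Type*} [CommSemiring R] {μ : V → R} {ν : W → R} {i : V} {j : W}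
    (hi : μ i = 0) (hj : ν j = 0) :
    ∏ x ∈ {(i, j)}ᶜ, (μ x.1 + ν x.2) =
      (∏ a ∈ {i}ᶜ, μ a) * (∏ b ∈ {j}ᶜ, ν b) * ∏ a ∈ {i}ᶜ, ∏ b ∈ {j}ᶜ, (μ a + ν b) := by
  have compl_eq : ({(i, j)} : Finset (V × W))ᶜ =
      ({i} : Finset V) ×ˢ ({j} : Finset W)ᶜ ∪ ({i} : Finset V)ᶜ ×ˢ univ := by
    ext ⟨a, b⟩
    simp only [mem_compl, mem_singleton, Prod.mk.injEq, mem_union, mem_product, mem_univ]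
    tauto
  have disjoint : Disjoint (({i} : Finset V) ×ˢ ({j} : Finset W)ᶜ) (({i} : Finset V)ᶜ ×ˢ univ) :=
    disjoint_product.2 (.inl disjoint_compl_right)
  rw [compl_eq, prod_union disjoint, prod_product, prod_product, prod_singleton]
  simp only [hi, hj, zero_add, add_zero, Fintype.prod_eq_mul_prod_compl j, prod_mul_distrib]
  ring

variable {G H}

theorem ncard_spanningTrees_boxProd {R : Type*} [CommRing R] [IsDomain R] [CharZero R]
    {U : Matrix V V R} {T : Matrix W W R} {μ : V → R} {ν : W → R} {i : V} {j : W}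
    (hG : IsEigenbasis (G.lapMatrix R) U μ) (hi : U.col i = 1)
    (hH : IsEigenbasis (H.lapMatrix R) T ν) (hj : T.col j = 1) :
    ((spanningTrees (G.boxProd H)).ncard : R) =
      (spanningTrees G).ncard * (spanningTrees H).ncard * ∏ a ∈ {i}ᶜ, ∏ b ∈ {j}ᶜ, (μ a + ν b) := by
  classical
  have hGH := hG.kronecker hH
  rw [← lapMatrix_boxProd] at hGH
  have hij : (U ⊗ₖ T).col (i, j) = 1 := by
    ext ⟨a, b⟩
    simpa using congrArg₂ (· * ·) (congrFun hi a) (congrFun hj b)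
  have card_ne_zero : (Fintype.card (V × W) : R) ≠ 0 := by
    have : Nonempty (V × W) := ⟨(i, j)⟩
    exact Nat.cast_ne_zero.2 Fintype.card_ne_zero
  refine mul_left_cancel₀ card_ne_zero ?_
  rw [hGH.card_mul_ncard_spanningTrees hij,
    prod_compl_singleton_add (hG.eigenvalue_eq_zero_of_col_eq_one hi)
      (hH.eigenvalue_eq_zero_of_col_eq_one hj),
    ← hG.card_mul_ncard_spanningTrees hi, ← hH.card_mul_ncard_spanningTrees hj, Fintype.card_prod,
    Nat.cast_mul]
  ring

end BoxProd

section PathGraph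

open Matrix SimpleGraph

lemma lapMatrix_pathGraph_mulVec {R : Type*} [CommRing R] {l : ℕ} [DecidableRel (pathGraph l).Adj]
    {y : ℕ → R} (h_zero : y 0 = y 1) (h_last : y l = y (l + 1)) (a : Fin l) :
    ((pathGraph l).lapMatrix R *ᵥ fun u => y (u + 1)) a = 2 * y (a + 1) - y a - y (a + 2) := by
  obtain ⟨a, ha⟩ := a
  have sum_next : ∑ u ∈ range l, (if u = a + 1 then y (a + 1) - y (u + 1) else 0) =
      y (a + 1) - y (a + 2) := by
    rw [sum_ite_eq']
    split_ifs with h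
    · rfl
    · obtain rfl : l = a + 1 := by
        rw [mem_range] at h
        omega
      rw [h_last, sub_self]
  have sum_prev : ∑ u ∈ range l, (if u + 1 = a then y (a + 1) - y (u + 1) else 0) =
      y (a + 1) - y a := by
    cases a with
    | zero => simp [h_zero]
    | succ a =>
      simp only [Nat.add_right_cancel_iff]
      rw [sum_ite_eq', if_pos (mem_range.2 (Nat.lt_of_succ_lt ha))]
  have ite_adj (u : ℕ) :
      (if a + 1 = u ∨ u + 1 = a then y (a + 1) - y (u + 1) else 0) =
        (if u = a + 1 then y (a + 1) - y (u + 1) else 0) +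
          if u + 1 = a then y (a + 1) - y (u + 1) else 0 := by
    by_cases h : u = a + 1
    · have : a + 1 + 1 ≠ a := by omega
      simp [h, this]
    · simp [h, Ne.symm h]
  rw [lapMatrix_mulVec_eq_sum_sub, neighborFinset_eq_filter, sum_filter]
  simp only [pathGraph_adj]
  rw [Fin.sum_univ_eq_sum_range
    (fun u => if a + 1 = u ∨ u + 1 = a then y (a + 1) - y (u + 1) else 0)]
  simp only [ite_adj, sum_add_distrib]
  rw [sum_next, sum_prev]
  ring

lemma lapMatrix_pathGraph_mulVec_cos {l : ℕ} [DecidableRel (pathGraph l).Adj] {θ : ℝ}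
    (hθ : sin (l * θ) = 0) (a : Fin l) :
    ((pathGraph l).lapMatrix ℝ *ᵥ fun u => cos (θ * (u + 1 / 2))) a =
      (2 - 2 * cos θ) * cos (θ * (a + 1 / 2)) := by
  let y (k : ℕ) : ℝ := cos (θ * k - θ / 2)
  have y_succ (k : ℕ) : y (k + 1) = cos (θ * (k + 1 / 2)) := by
    push_cast [y]
    ring_nf
  have h_zero : y 0 = y 1 := by
    simp only [y]
    rw [← cos_neg]
    push_cast
    ring_nf
  have h_last : y l = y (l + 1) := by
    rw [y_succ, mul_add, mul_one_div, mul_comm θ l, cos_add, hθ]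
    simp only [y]
    rw [cos_sub, mul_comm θ l, hθ]
    ring
  have y_prev : y a = cos (θ * (a + 1 / 2) - θ) := by
    simp only [y]
    ring_nf
  have y_next : y (a + 2) = cos (θ * (a + 1 / 2) + θ) := by
    push_cast [y]
    ring_nf
  simp only [← y_succ]
  rw [lapMatrix_pathGraph_mulVec h_zero h_last, y_prev, y_next, y_succ, cos_add, cos_sub]
  ring

/-- The matrix whose `j`-th column is the discrete cosine wave of frequency `j`, sampled at the
half-integers, so that it is symmetric about both ends of the path. -/
noncomputable def cosineMatrix (l : ℕ) : Matrix (Fin l) (Fin l) ℝ :=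
  of fun a j => cos (π * j / l * (a + 1 / 2))

lemma cosineMatrix_apply {l : ℕ} (a j : Fin l) :
    cosineMatrix l a j = cos (π * j / l * (a + 1 / 2)) := rfl

lemma col_zero_cosineMatrix (n : ℕ) : (cosineMatrix (n + 1)).col 0 = 1 := by
  ext a
  simp [cosineMatrix_apply]

lemma col_cosineMatrix_ne_zero {l : ℕ} (j : Fin l) : (cosineMatrix l).col j ≠ 0 := by
  have hl : (0 : ℝ) < l := Nat.cast_pos.2 j.pos
  have hj : (j : ℝ) < l := Nat.cast_lt.2 j.isLt
  have first_pos : 0 < cosineMatrix l ⟨0, j.pos⟩ j := by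
    refine cos_pos_of_mem_Ioo ⟨(neg_neg_of_pos (by positivity)).trans_le (by positivity), ?_⟩
    have : π * j / l < π := by
      rw [div_lt_iff₀ hl]
      gcongr
    push_cast
    linarith
  exact fun h => first_pos.ne' (congrFun h _)

lemma pathEig_injective (l : ℕ) : Function.Injective fun j : Fin l => pathEig l j := by
  intro i j h
  have hl : (0 : ℝ) < l := Nat.cast_pos.2 i.pos
  have angle_mem (k : Fin l) : π * k / l ∈ Set.Icc 0 π := by
    refine ⟨by positivity, ?_⟩
    rw [div_le_iff₀ hl]
    gcongr
    exact k.isLt.le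
  have cos_eq : cos (π * i / l) = cos (π * j / l) := by
    simpa [pathEig] using h
  have angle_eq := injOn_cos (angle_mem i) (angle_mem j) cos_eq
  field_simp at angle_eq
  exact Fin.ext (Nat.cast_injective angle_eq)

lemma lapMatrix_pathGraph_mul_cosineMatrix (l : ℕ) [DecidableRel (pathGraph l).Adj] :
    (pathGraph l).lapMatrix ℝ * cosineMatrix l =
      cosineMatrix l * diagonal fun j : Fin l => pathEig l j := by
  ext a j
  have hl : (l : ℝ) ≠ 0 := Nat.cast_ne_zero.2 j.pos.ne'
  have sin_eq_zero : sin (l * (π * j / l)) = 0 := by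
    rw [mul_div_cancel₀ _ hl, mul_comm, sin_nat_mul_pi]
  rw [mul_diagonal, mul_comm (cosineMatrix l a j)]
  exact lapMatrix_pathGraph_mulVec_cos sin_eq_zero a

lemma isEigenbasis_cosineMatrix (l : ℕ) [DecidableRel (pathGraph l).Adj] :
    IsEigenbasis ((pathGraph l).lapMatrix ℝ) (cosineMatrix l) fun j => pathEig l j :=
  .of_injective (pathEig_injective l) col_cosineMatrix_ne_zero
    (lapMatrix_pathGraph_mul_cosineMatrix l)

lemma ncard_spanningTrees_pathGraph (n : ℕ) : (spanningTrees (pathGraph (n + 1))).ncard = 1 := by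
  have isTree : (pathGraph (n + 1)).IsTree := isTree_hasse (Fin (n + 1))
  rw [spanningTrees_eq_singleton isTree, Set.ncard_singleton]

end PathGraph

lemma prod_compl_zero_eq_prod_Icc {M : Type*} [CommMonoid M] (n : ℕ) (f : ℕ → M) :
    ∏ j ∈ ({0}ᶜ : Finset (Fin (n + 1))), f j = ∏ j ∈ Icc 1 n, f j := by
  refine prod_nbij (fun j => (j : ℕ)) (fun j hj => ?_) Fin.val_injective.injOn (fun k hk => ?_)
    fun _ _ => rfl
  · rw [mem_compl, mem_singleton, ← Fin.val_eq_zero_iff] at hj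
    exact mem_Icc.2 ⟨Nat.one_le_iff_ne_zero.2 hj, j.is_le⟩
  · obtain ⟨hk1, hkn⟩ := mem_Icc.1 hk
    refine ⟨⟨k, Nat.lt_succ_of_le hkn⟩, ?_, rfl⟩
    simpa [← Fin.val_eq_zero_iff] using Nat.one_le_iff_ne_zero.1 hk1

theorem tau_product_formula (l m : ℕ) (hl : 0 < l) (hm : 0 < m) :
    (gridTau l m : ℝ) =
      ∏ j ∈ Finset.Icc 1 (l - 1), ∏ k ∈ Finset.Icc 1 (m - 1),
        (pathEig l j + pathEig m k) := by
  classical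
  obtain ⟨n, rfl⟩ := Nat.exists_eq_add_one_of_ne_zero hl.ne'
  obtain ⟨p, rfl⟩ := Nat.exists_eq_add_one_of_ne_zero hm.ne'
  rw [gridTau, ncard_isSpanning_isTree_eq_ncard_spanningTrees, gridGraph,
    ncard_spanningTrees_boxProd (isEigenbasis_cosineMatrix _) (col_zero_cosineMatrix n)
      (isEigenbasis_cosineMatrix _) (col_zero_cosineMatrix p),
    ncard_spanningTrees_pathGraph, ncard_spanningTrees_pathGraph, Nat.cast_one, one_mul, one_mul,
    prod_compl_zero_eq_prod_Icc n fun j => ∏ k ∈ {0}ᶜ, (pathEig _ j + pathEig _ (k : Fin (p + 1)))]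
  exact Finset.prod_congr rfl fun j _ =>
    prod_compl_zero_eq_prod_Icc p fun k => pathEig (n + 1) j + pathEig (p + 1) k
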